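/- For every integer t ≥ 4: w_4^{2^{t-1}-1} ∈ I_{2^t-1,4} and w_4^{2^{t-1}-2} ∉ I_{2^t-1,4}; that is, the image of w_4 in F_2[w_2,w_3,w_4]/I_{2^t-1,4} has height exactly 2^{t-1}-2. (This expresses that the height of the Stiefel–Whitney class w̃_4 in H^*(G̃_{2^t-1,4}; F_2) equals 2^{t-1}-2.) -/

import Mathlib

open MvPolynomial

/-- The polynomials `g_r = g_r^{(4)}` in `F_2[w_2,w_3,w_4]` (variables `X 0 = w_2`,
`X 1 = w_3`, `X 2 = w_4`): `g_0 = 1`, `g_r = 0` for `r < 0`, and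
`g_r = w_2·g_{r-2} + w_3·g_{r-3} + w_4·g_{r-4}` for `r ≥ 1`. -/
noncomputable def g4 : ℤ → MvPolynomial (Fin 3) (ZMod 2)
  | r =>
    if r ≤ 0 then (if r = 0 then 1 else 0)
    else X 0 * g4 (r - 2) + X 1 * g4 (r - 3) + X 2 * g4 (r - 4)
  termination_by r => r.toNat
  decreasing_by all_goals omega

/-- The ideal `I_{n,4} = (g_{n-3}, g_{n-2}, g_{n-1}, g_n)` of `F_2[w_2,w_3,w_4]`. -/
noncomputable def I4 (n : ℤ) : Ideal (MvPolynomial (Fin 3) (ZMod 2)) :=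
  Ideal.span {g4 (n - 3), g4 (n - 2), g4 (n - 1), g4 n}

abbrev R4 := MvPolynomial (Fin 3) (ZMod 2)

lemma two0 : (2 : R4) = 0 := CharTwo.two_eq_zero

lemma g4_neg (r : ℤ) (h : r < 0) : g4 r = 0 := by
  rw [g4, if_pos h.le, if_neg h.ne]

lemma g4_zero : g4 0 = 1 := by
  rw [g4]; simp

lemma g4_pos (r : ℤ) (h : 0 < r) :
    g4 r = X 0 * g4 (r - 2) + X 1 * g4 (r - 3) + X 2 * g4 (r - 4) := by
  conv_lhs => rw [g4]
  rw [if_neg (by omega)]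

lemma g4_double (n : ℕ) : ∀ r : ℤ, r < n →
    g4 (2 * r) = g4 r ^ 2 + X 0 * g4 (r - 1) ^ 2 + X 2 * g4 (r - 2) ^ 2 ∧
    g4 (2 * r + 1) = X 1 * g4 (r - 1) ^ 2 := by
  induction n with
  | zero =>
    intro r hr
    have hr : r < 0 := by simpa using hr
    rw [g4_neg (2 * r) (by omega), g4_neg r (by omega), g4_neg (r - 1) (by omega),
      g4_neg (r - 2) (by omega), g4_neg (2 * r + 1) (by omega)]
    simp
  | succ n ih =>
    intro r hr
    by_cases h : r < n
    · exact ih r h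
    have hn : r = n := by push_cast at hr; omega
    obtain ⟨e1, o1⟩ := ih (r - 1) (by omega)
    obtain ⟨e2, o2⟩ := ih (r - 2) (by omega)
    rcases Nat.eq_zero_or_pos n with h0 | h0
    · have : r = 0 := by omega
      subst this
      rw [g4_pos (2 * 0 + 1) (by norm_num)]
      norm_num
      rw [g4_zero, g4_neg (-1) (by norm_num), g4_neg (-2) (by norm_num), g4_neg (-3) (by norm_num)]
      simp
    have E : g4 (2 * r) = X 0 * g4 (2 * (r - 1)) + X 1 * g4 (2 * (r - 2) + 1)
        + X 2 * g4 (2 * (r - 2)) := by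
      rw [g4_pos (2 * r) (by omega)]
      congr 3 <;> ring_nf
    have O : g4 (2 * r + 1) = X 0 * g4 (2 * (r - 1) + 1) + X 1 * g4 (2 * (r - 1))
        + X 2 * g4 (2 * (r - 2) + 1) := by
      rw [g4_pos (2 * r + 1) (by omega)]
      congr 3 <;> ring_nf
    have G := g4_pos r (by omega)
    have s1 : r - 1 - 1 = r - 2 := by ring
    have s2 : r - 1 - 2 = r - 3 := by ring
    have s3 : r - 2 - 1 = r - 3 := by ring
    have s4 : r - 2 - 2 = r - 4 := by ring
    rw [s1] at o1
    rw [s1, s2] at e1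
    rw [s3] at o2
    rw [s3, s4] at e2
    constructor
    · rw [E, e1, o2, e2, G]
      linear_combination (-(X 0 * g4 (r-2) * X 1 * g4 (r-3)) - (X 0 * g4 (r-2) * X 2 * g4 (r-4))
        - (X 1 * g4 (r-3) * X 2 * g4 (r-4)) + X 0 * X 2 * g4 (r-3) ^ 2) * two0
    · rw [O, o1, e1, o2]
      linear_combination (X 0 * X 1 * g4 (r-2)^2 + X 1 * X 2 * g4 (r-3)^2) * two0

lemma g4_even (r : ℤ) : g4 (2 * r) = g4 r ^ 2 + X 0 * g4 (r - 1) ^ 2 + X 2 * g4 (r - 2) ^ 2 :=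
  (g4_double (r.toNat + 1) r (by push_cast; omega)).1

lemma g4_odd (r : ℤ) : g4 (2 * r + 1) = X 1 * g4 (r - 1) ^ 2 :=
  (g4_double (r.toNat + 1) r (by push_cast; omega)).2

noncomputable def ga (s : ℕ) : R4 := g4 (2 ^ (s + 2) - 4)
noncomputable def gb (s : ℕ) : R4 := g4 (2 ^ (s + 2) - 2)
noncomputable def gc (s : ℕ) : R4 := g4 (2 ^ (s + 2) - 1)
noncomputable def gd (s : ℕ) : R4 := g4 (2 ^ (s + 1) - 2)

lemma g4_three (s : ℕ) : g4 (2 ^ (s + 2) - 3) = 0 := by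
  induction s with
  | zero =>
    rw [show (2 : ℤ) ^ (0 + 2) - 3 = 2 * 0 + 1 by norm_num, g4_odd, g4_neg _ (by norm_num)]
    simp
  | succ s ih =>
    rw [show (2 : ℤ) ^ (s + 1 + 2) - 3 = 2 * (2 ^ (s + 2) - 2) + 1 by ring, g4_odd,
      show (2 : ℤ) ^ (s + 2) - 2 - 1 = 2 ^ (s + 2) - 3 by ring, ih]
    simp

lemma ga_succ (s : ℕ) : ga (s + 1) = gb s ^ 2 + X 2 * ga s ^ 2 := by
  unfold ga gb
  rw [show (2 : ℤ) ^ (s + 1 + 2) - 4 = 2 * (2 ^ (s + 2) - 2) by ring, g4_even,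
    show (2 : ℤ) ^ (s + 2) - 2 - 1 = 2 ^ (s + 2) - 3 by ring,
    show (2 : ℤ) ^ (s + 2) - 2 - 2 = 2 ^ (s + 2) - 4 by ring, g4_three]
  simp

lemma gb_succ (s : ℕ) : gb (s + 1) = gc s ^ 2 + X 0 * gb s ^ 2 := by
  unfold gb gc
  rw [show (2 : ℤ) ^ (s + 1 + 2) - 2 = 2 * (2 ^ (s + 2) - 1) by ring, g4_even,
    show (2 : ℤ) ^ (s + 2) - 1 - 1 = 2 ^ (s + 2) - 2 by ring,
    show (2 : ℤ) ^ (s + 2) - 1 - 2 = 2 ^ (s + 2) - 3 by ring, g4_three]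
  simp

lemma gc_eq (s : ℕ) : gc s = X 1 * gd s ^ 2 := by
  unfold gd gc
  rw [show (2 : ℤ) ^ (s + 2) - 1 = 2 * (2 ^ (s + 1) - 1) + 1 by ring, g4_odd,
    show (2 : ℤ) ^ (s + 1) - 1 - 1 = 2 ^ (s + 1) - 2 by ring]

lemma gc_succ (s : ℕ) : gc (s + 1) = X 1 * gb s ^ 2 := gc_eq (s + 1)

lemma ga_zero : ga 0 = 1 := by
  unfold ga; norm_num [g4_zero]

lemma gb_zero : gb 0 = X 0 := by
  unfold gb
  rw [show (2 : ℤ) ^ (0 + 2) - 2 = 2 * 1 by norm_num, g4_even, g4_neg (1 - 2) (by norm_num)]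
  rw [show (1 : ℤ) = 2 * 0 + 1 by norm_num, g4_odd, g4_neg (0 - 1) (by norm_num)]
  norm_num [g4_zero]

lemma gd_zero : gd 0 = 1 := by
  unfold gd; norm_num [g4_zero]

lemma gc_zero : gc 0 = X 1 := by
  rw [gc_eq, gd_zero]; simp

lemma I4_eq (s : ℕ) : I4 (2 ^ (s + 2) - 1) = Ideal.span {ga s, gb s, gc s} := by
  unfold I4
  rw [show (2 : ℤ) ^ (s + 2) - 1 - 3 = 2 ^ (s + 2) - 4 by ring,
    show (2 : ℤ) ^ (s + 2) - 1 - 2 = 2 ^ (s + 2) - 3 by ring,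
    show (2 : ℤ) ^ (s + 2) - 1 - 1 = 2 ^ (s + 2) - 2 by ring, g4_three,
    Set.insert_comm, Ideal.span_insert_zero]
  rfl

lemma mem3 (x a b c : R4) : x ∈ Ideal.span {a, b, c} ↔ ∃ u v w, x = u * a + v * b + w * c := by
  simp only [Ideal.mem_span_insert, Ideal.mem_span_singleton']
  constructor
  · rintro ⟨u, _, ⟨v, _, ⟨w, rfl⟩, rfl⟩, rfl⟩
    exact ⟨u, v, w, by ring⟩
  · rintro ⟨u, v, w, rfl⟩
    exact ⟨u, _, ⟨v, _, ⟨w, rfl⟩, rfl⟩, by ring⟩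

lemma upper (s : ℕ) : ∃ A B C : R4, (X 2 : R4) ^ (2 ^ (s + 1) - 1) =
    (X 0 * gb s + X 2 * ga s + X 1 * A) * ga s + (gb s + X 1 * B) * gb s + X 1 * C * gc s := by
  induction s with
  | zero =>
    refine ⟨0, 0, 0, ?_⟩
    rw [ga_zero, gb_zero]
    norm_num
    linear_combination (-X 0 * X 0) * two0
  | succ s ih =>
    obtain ⟨A, B, C, h⟩ := ih
    refine ⟨X 0 * gd s ^ 2 * gc s + X 1 * A ^ 2, X 2 * X 1 * C ^ 2 + gd s ^ 2 * gc s,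
      A ^ 2 + X 2 * B ^ 2 + X 0 * X 2 * C ^ 2 + X 0 * gd s ^ 4, ?_⟩
    have e : 2 ^ (s + 1 + 1) - 1 = 2 * (2 ^ (s + 1) - 1) + 1 := by
      have : 1 ≤ 2 ^ (s + 1) := Nat.one_le_two_pow
      rw [pow_succ]; omega
    rw [e, pow_succ, pow_mul', h, ga_succ, gb_succ, gc_succ, gc_eq]
    generalize ga s = a
    generalize gb s = b
    generalize gd s = d
    simp only [CharTwo.add_sq, mul_pow]
    linear_combination (-(X 0 * b ^ 2 * X 2 * X 1 ^ 2 * C ^ 2) - (X 0 * b ^ 2 * X 1 ^ 2 * d ^ 4 * 3)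
      - (X 0 * X 2 * a ^ 2 * X 1 ^ 2 * d ^ 4) - (X 0 ^ 2 * b ^ 4) - (b ^ 2 * X 2 ^ 2 * a ^ 2)
      - (b ^ 2 * X 1 ^ 2 * A ^ 2) - (X 1 ^ 4 * d ^ 8)) * two0

/-- setting a variable to zero -/
noncomputable def kil (i : Fin 3) : R4 →ₐ[ZMod 2] R4 := aeval (fun j => if j = i then 0 else X j)

lemma kil_dvd (i : Fin 3) (f : R4) : (X i : R4) ∣ f - kil i f := by
  have : ((Ideal.Quotient.mkₐ (ZMod 2) (Ideal.span {(X i : R4)})).comp (kil i)) =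
      Ideal.Quotient.mkₐ (ZMod 2) (Ideal.span {(X i : R4)}) := by
    apply MvPolynomial.algHom_ext
    intro j
    simp only [kil, AlgHom.comp_apply, aeval_X]
    split_ifs with h
    · subst h
      rw [map_zero]
      symm
      exact Ideal.Quotient.eq_zero_iff_mem.2 (Ideal.mem_span_singleton_self _)
    · rfl
  rw [← Ideal.mem_span_singleton, ← Ideal.Quotient.mk_eq_mk_iff_sub_mem]
  exact (DFunLike.congr_fun this f).symm

lemma kil_eq (i : Fin 3) (f : R4) : ∃ r, f = kil i f + X i * r := by
  obtain ⟨r, h⟩ := kil_dvd i f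
  exact ⟨r, by linear_combination h⟩

lemma kil_self (i : Fin 3) : kil i (X i) = 0 := by simp [kil]
lemma kil_ne (i j : Fin 3) (h : j ≠ i) : kil i (X j) = X j := by simp [kil, h]

lemma prime_X' (i : Fin 3) : Prime (X i : R4) := by
  exact X_prime

lemma kil_gc (s : ℕ) : kil 1 (gc s) = 0 := by
  rw [gc_eq, map_mul, kil_self, zero_mul]

lemma kil_gb (s : ℕ) : kil 1 (gb s) = X 0 ^ (2 ^ (s + 1) - 1) := by
  induction s with
  | zero => rw [gb_zero, kil_ne _ _ (by decide)]; norm_num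
  | succ s ih =>
    have e : 2 ^ (s + 1 + 1) - 1 = 2 * (2 ^ (s + 1) - 1) + 1 := by
      have : 1 ≤ 2 ^ (s + 1) := Nat.one_le_two_pow
      rw [pow_succ]; omega
    rw [gb_succ, map_add, map_mul, map_pow, map_pow, kil_gc, kil_ne _ _ (by decide), ih, e]
    ring

lemma kil2 (s : ℕ) : kil 2 (gb s) = gb s ∧ kil 2 (gc s) = gc s := by
  induction s with
  | zero => rw [gb_zero, gc_zero]; exact ⟨kil_ne _ _ (by decide), kil_ne _ _ (by decide)⟩
  | succ s ih =>
    rw [gb_succ, gc_succ]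
    simp only [map_add, map_mul, map_pow, ih.1, ih.2, kil_ne 2 0 (by decide), kil_ne 2 1 (by decide)]
    exact ⟨trivial, trivial⟩

lemma kil_ga (s : ℕ) : kil 0 (kil 1 (ga s)) ≠ 0 := by
  induction s with
  | zero => rw [ga_zero]; simp
  | succ s ih =>
    have e : 2 ^ (s + 1) - 1 ≠ 0 := by
      have : 2 ≤ 2 ^ (s + 1) := by rw [pow_succ]; have := Nat.one_le_two_pow (n := s); omega
      omega
    rw [ga_succ]
    simp only [map_add, map_mul, map_pow, kil_gb, kil_self, kil_ne 1 2 (by decide),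
      kil_ne 0 2 (by decide)]
    rw [zero_pow e]
    simpa using ih

lemma gb_ndvd (s : ℕ) : ¬ (X 1 : R4) ∣ gb s := by
  rintro ⟨r, h⟩
  have := congrArg (kil 1) h
  rw [kil_gb, map_mul, kil_self, zero_mul] at this
  exact pow_ne_zero _ (X_ne_zero _) this

lemma gb_ne (s : ℕ) : gb s ≠ 0 := fun h => gb_ndvd s (h ▸ dvd_zero _)

lemma gc_ne (s : ℕ) : gc s ≠ 0 := by
  cases s with
  | zero => rw [gc_zero]; exact X_ne_zero _
  | succ s => rw [gc_succ]; exact mul_ne_zero (X_ne_zero _) (pow_ne_zero _ (gb_ne s))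

lemma rel_bc (s : ℕ) : IsRelPrime (gb s) (gc s) := by
  induction s with
  | zero =>
    rw [gc_zero]
    exact (((prime_X' 1).irreducible.isRelPrime_iff_not_dvd).2 (gb_ndvd 0)).symm
  | succ s ih =>
    rw [gc_succ]
    refine IsRelPrime.mul_right
      (((prime_X' 1).irreducible.isRelPrime_iff_not_dvd).2 (gb_ndvd _)).symm ?_
    rw [gb_succ]
    have : IsRelPrime (gc s ^ 2) (gb s ^ 2) := ih.symm.pow
    exact this.add_mul_right_left _

lemma colon (s : ℕ) (x : R4)
    (h : X 1 * X 2 * x ∈ Ideal.span {ga (s + 1), gb (s + 1), gc (s + 1)}) :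
    ∃ u v w, x = u * ga s ^ 2 + v * gb s ^ 2 + w * gc s ^ 2 := by
  obtain ⟨u, v, w, h⟩ := (mem3 _ _ _ _).1 h
  have hp := congrArg (kil 1) h
  set N := 2 ^ (s + 1 + 1) - 1 with hN
  simp only [map_mul, map_add, kil_self, kil_gc, kil_gb, ← hN] at hp
  have hrel : IsRelPrime ((X 0 : R4) ^ N) (kil 1 (ga (s + 1))) := by
    apply IsRelPrime.pow_left
    refine ((prime_X' 0).irreducible.isRelPrime_iff_not_dvd).2 ?_
    rintro ⟨r, hr⟩
    apply kil_ga (s + 1)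
    rw [hr, map_mul, kil_self, zero_mul]
  have hd : (X 0 : R4) ^ N ∣ kil 1 u := by
    refine hrel.dvd_of_dvd_mul_right (z := kil 1 (ga (s + 1))) ⟨- kil 1 v, ?_⟩
    linear_combination -hp
  obtain ⟨l, hl⟩ := hd
  have hv : kil 1 v = - l * kil 1 (ga (s + 1)) := by
    have h0 : (X 0 : R4) ^ N ≠ 0 := pow_ne_zero _ (X_ne_zero _)
    apply mul_left_cancel₀ h0
    rw [hl] at hp
    linear_combination -hp
  obtain ⟨u0, hu0⟩ := kil_eq 1 u
  obtain ⟨v0, hv0⟩ := kil_eq 1 v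
  obtain ⟨r1, hr1⟩ := kil_eq 1 (gb (s + 1))
  obtain ⟨r2, hr2⟩ := kil_eq 1 (ga (s + 1))
  rw [kil_gb, ← hN] at hr1
  -- u = l * b' + X1 * u1, v = - l * a' + X1 * v1
  obtain ⟨u1, hu1⟩ : ∃ u1, u = l * gb (s + 1) + X 1 * u1 :=
    ⟨u0 - l * r1, by linear_combination hu0 + hl - l * hr1⟩
  obtain ⟨v1, hv1⟩ : ∃ v1, v = - l * ga (s + 1) + X 1 * v1 :=
    ⟨v0 + l * r2, by linear_combination hv0 + hv + l * hr2⟩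
  have h2 : X 2 * x = u1 * ga (s + 1) + v1 * gb (s + 1) + w * gb s ^ 2 := by
    apply mul_left_cancel₀ (X_ne_zero (1 : Fin 3) : (X 1 : R4) ≠ 0)
    rw [hu1, hv1, gc_succ] at h
    linear_combination h
  rw [ga_succ, gb_succ] at h2
  have hq := congrArg (kil 2) h2
  simp only [map_mul, map_add, map_pow, kil_self, (kil2 s).1, (kil2 s).2] at hq
  have hrel2 : IsRelPrime (gb s ^ 2) (gc s ^ 2) := (rel_bc s).pow
  have hd : gb s ^ 2 ∣ kil 2 v1 := by
    refine hrel2.dvd_of_dvd_mul_right (z := gc s ^ 2)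
      ⟨- (kil 2 u1 + kil 2 v1 * kil 2 (X 0) + kil 2 w), ?_⟩
    linear_combination -hq
  obtain ⟨p, hp2⟩ := hd
  have hz : kil 2 u1 + kil 2 v1 * kil 2 (X 0) + kil 2 w = - gc s ^ 2 * p := by
    apply mul_left_cancel₀ (pow_ne_zero 2 (gb_ne s))
    linear_combination -hq - gc s ^ 2 * hp2
  obtain ⟨v2, hv2⟩ := kil_eq 2 v1
  obtain ⟨y, hy⟩ := kil_eq 2 (u1 + v1 * X 0 + w)
  simp only [map_add, map_mul] at hy
  refine ⟨u1, y, v2, ?_⟩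
  apply mul_left_cancel₀ (X_ne_zero (2 : Fin 3) : (X 2 : R4) ≠ 0)
  linear_combination h2 + gb s ^ 2 * hy + gb s ^ 2 * hz + gc s ^ 2 * hv2 + gc s ^ 2 * hp2

/-- half of an exponent vector -/
noncomputable def hlf (m : Fin 3 →₀ ℕ) : Fin 3 →₀ ℕ := m.mapRange (fun k => k / 2) rfl

open Classical in
noncomputable def psi : R4 →ₗ[ZMod 2] R4 :=
  (basisMonomials (Fin 3) (ZMod 2)).constr (ZMod 2)
    (fun m => if ∀ i, m i % 2 = 1 then monomial (hlf m) 1 else 0)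

open Classical in
lemma psi_monomial (m : Fin 3 →₀ ℕ) :
    psi (monomial m 1) = if ∀ i, m i % 2 = 1 then monomial (hlf m) 1 else 0 := by
  have := (basisMonomials (Fin 3) (ZMod 2)).constr_basis (ZMod 2)
    (fun m => if ∀ i, m i % 2 = 1 then (monomial (hlf m) 1 : R4) else 0) m
  rwa [coe_basisMonomials] at this

lemma psi_mm (m n : Fin 3 →₀ ℕ) : psi (monomial n 1 * monomial m 1 ^ 2) =
    psi (monomial n 1) * monomial m 1 := by
  rw [monomial_pow, monomial_mul, one_pow, mul_one, psi_monomial, psi_monomial]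
  have : (∀ i, (n + 2 • m) i % 2 = 1) ↔ ∀ i, n i % 2 = 1 := by
    refine forall_congr' fun i => ?_
    simp
  simp only [this]
  split_ifs
  · have e : hlf (n + 2 • m) = hlf n + m := by
      ext i
      simp only [hlf, Finsupp.mapRange_apply, Finsupp.add_apply, Finsupp.smul_apply, smul_eq_mul]
      omega
    rw [monomial_mul, mul_one, e]
  · simp

lemma zmod_mono (m : Fin 3 →₀ ℕ) (a : ZMod 2) :
    (monomial m a : R4) = 0 ∨ (monomial m a : R4) = monomial m 1 := by
  fin_cases a
  · left; exact map_zero _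
  · right; rfl

lemma psi_mul (f g : R4) : psi (f * g ^ 2) = psi f * g := by
  induction g using MvPolynomial.induction_on' with
  | monomial m a =>
    rcases zmod_mono m a with h | h
    · rw [h]; simp
    rw [h]
    induction f using MvPolynomial.induction_on' with
    | monomial n b =>
      rcases zmod_mono n b with h | h
      · rw [h]; simp
      rw [h, psi_mm]
    | add p q hp hq => rw [add_mul, map_add, map_add, hp, hq, add_mul]
  | add p q hp hq => rw [CharTwo.add_sq, mul_add, map_add, hp, hq, mul_add]

lemma psi_top : psi (X 0 * X 1 * X 2) = 1 := by
  have : (X 0 * X 1 * X 2 : R4) =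
      monomial (Finsupp.single 0 1 + Finsupp.single 1 1 + Finsupp.single 2 1) 1 := by
    simp [X, monomial_mul]
  rw [this, psi_monomial, if_pos]
  · have : hlf (Finsupp.single 0 1 + Finsupp.single 1 1 + Finsupp.single 2 1) = 0 := by
      ext i; fin_cases i <;> simp [hlf]
    rw [this]; rfl
  · intro i; fin_cases i <;> simp

noncomputable def ex (a b c : ℕ) : Fin 3 →₀ ℕ :=
  Finsupp.single 0 a + Finsupp.single 1 b + Finsupp.single 2 c

lemma ex0s (a b c : ℕ) (p : R4) : coeff (ex (a + 1) b c) (p * X 0) = coeff (ex a b c) p := by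
  rw [show ex (a + 1) b c = ex a b c + Finsupp.single 0 1 by
    ext i; fin_cases i <;> simp [ex], coeff_mul_X]
lemma ex1s (a b c : ℕ) (p : R4) : coeff (ex a (b + 1) c) (p * X 1) = coeff (ex a b c) p := by
  rw [show ex a (b + 1) c = ex a b c + Finsupp.single 1 1 by
    ext i; fin_cases i <;> simp [ex], coeff_mul_X]
lemma ex2s (a b c : ℕ) (p : R4) : coeff (ex a b (c + 1)) (p * X 2) = coeff (ex a b c) p := by
  rw [show ex a b (c + 1) = ex a b c + Finsupp.single 2 1 by
    ext i; fin_cases i <;> simp [ex], coeff_mul_X]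
lemma ex0z (b c : ℕ) (p : R4) : coeff (ex 0 b c) (p * X 0) = 0 := by
  rw [coeff_mul_X', if_neg]; simp [ex]
lemma ex1z (a c : ℕ) (p : R4) : coeff (ex a 0 c) (p * X 1) = 0 := by
  rw [coeff_mul_X', if_neg]; simp [ex]
lemma ex2z (a b : ℕ) (p : R4) : coeff (ex a b 0) (p * X 2) = 0 := by
  rw [coeff_mul_X', if_neg]; simp [ex]

lemma base : (X 2 : R4) ^ 2 ∉ Ideal.span {ga 1, gb 1, gc 1} := by
  intro h
  obtain ⟨u, v, w, h⟩ := (mem3 _ _ _ _).1 h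
  rw [ga_succ, gb_succ, gc_succ, ga_zero, gb_zero, gc_zero] at h
  have h : 1 * X 2 * X 2 = u * X 0 * X 0 + u * X 2 + v * X 1 * X 1 + v * X 0 * X 0 * X 0
      + w * X 1 * X 0 * X 0 := by linear_combination h
  have h1 := congrArg (coeff (ex 0 0 (1 + 1))) h
  have h2 := congrArg (coeff (ex (1 + 1) 0 (0 + 1))) h
  have h3 := congrArg (coeff (ex (0 + 1 + 1 + 1 + 1) 0 0)) h
  have h4 := congrArg (coeff (ex (0 + 1) (0 + 1 + 1) 0)) h
  have hone : coeff (ex 0 0 0) (1 : R4) = 1 := by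
    rw [show ex 0 0 0 = 0 by simp [ex]]; simp
  simp only [coeff_add, ex0s, ex1s, ex2s, ex0z, ex1z, ex2z] at h1 h2 h3 h4
  norm_num at h1 h2 h3 h4
  have : (1 : ZMod 2) = 0 := by linear_combination -hone + h1 - h2 + h3 - h4
  exact one_ne_zero this

lemma lower (s : ℕ) : (X 0 * X 1 ^ 2 : R4) ^ (2 ^ s - 1) * X 2 ^ (2 ^ (s + 2) - 2) ∉
    Ideal.span {ga (s + 1), gb (s + 1), gc (s + 1)} := by
  induction s with
  | zero => simpa using base
  | succ s ih =>
    intro h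
    apply ih
    set S := (X 0 * X 1 ^ 2 : R4) ^ (2 ^ s - 1) * X 2 ^ (2 ^ (s + 2) - 2) with hS
    have e : (X 0 * X 1 ^ 2 : R4) ^ (2 ^ (s + 1) - 1) * X 2 ^ (2 ^ (s + 1 + 2) - 2) =
        X 1 * X 2 * (X 0 * X 1 * X 2 * S ^ 2) := by
      have e1 : 2 ^ (s + 1) - 1 = 2 * (2 ^ s - 1) + 1 := by
        have : 1 ≤ 2 ^ s := Nat.one_le_two_pow
        rw [pow_succ]; omega
      have e2 : 2 ^ (s + 1 + 2) - 2 = 2 * (2 ^ (s + 2) - 2) + 2 := by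
        have : 1 ≤ 2 ^ s := Nat.one_le_two_pow
        have : 2 ^ (s + 2) = 4 * 2 ^ s := by ring
        have : 2 ^ (s + 1 + 2) = 8 * 2 ^ s := by ring
        omega
      rw [e1, e2, hS]
      ring
    rw [e] at h
    obtain ⟨u, v, w, h⟩ := colon _ _ h
    have h := congrArg psi h
    rw [map_add, map_add, psi_mul, psi_mul, psi_mul, psi_mul, psi_top, one_mul] at h
    exact (mem3 _ _ _ _).2 ⟨_, _, _, h⟩

/-- Proposition 3.6: for every `t ≥ 4`, `w_4^{2^{t-1}-1} ∈ I_{2^t-1,4}` and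
`w_4^{2^{t-1}-2} ∉ I_{2^t-1,4}`, i.e. the image of `w_4` in
`F_2[w_2,w_3,w_4]/I_{2^t-1,4}` has height exactly `2^{t-1} - 2`. -/
theorem stmt9 (t : ℕ) (ht : 4 ≤ t) :
    (X 2 : MvPolynomial (Fin 3) (ZMod 2)) ^ (2 ^ (t - 1) - 1) ∈ I4 (2 ^ t - 1) ∧
      (X 2 : MvPolynomial (Fin 3) (ZMod 2)) ^ (2 ^ (t - 1) - 2) ∉ I4 (2 ^ t - 1) := by

  obtain ⟨s, rfl⟩ : ∃ s, t = s + 1 + 2 := ⟨t - 3, by omega⟩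
  rw [I4_eq]
  constructor
  · obtain ⟨A, B, C, h⟩ := upper (s + 1)
    exact (mem3 _ _ _ _).2 ⟨_, _, _, h⟩
  · intro h
    exact lower s (Ideal.mul_mem_left _ _ h)
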